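/- arXiv:2512.11153 — 2 statements merged into one kernel-verified Lean document; each statement's English description precedes it below -/
import Mathlib

section
/- Let k ≥ 2 be an integer, and let α ∈ [0, 1/(k-1)) and β ∈ [0,1] be rational numbers satisfying β + (k-1)·α = 1. Then there exists a finite simple graph G that is regular of positive degree (in particular δ(G) > 0) and admits a FAT k-coloring with parameters α and β. -/
/-- A FAT `k`-coloring of a simple graph `G` with parameters `α, β`:
a surjective vertex coloring `c : V → Fin k` such that for every vertex `v` and every
color `i`, the number of neighbors of `v` colored `i` equals `α·deg(v)` if `c v ≠ i`,
and `β·deg(v)` if `c v = i`. -/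
def IsFATColoring {V : Type*} (G : SimpleGraph V) (k : ℕ) (α β : ℝ) (c : V → Fin k) : Prop :=
  Function.Surjective c ∧
  ∀ (v : V) (i : Fin k),
    (Nat.card {u : V | G.Adj v u ∧ c u = i} : ℝ) =
      if c v = i then β * (G.neighborSet v).ncard else α * (G.neighborSet v).ncard

lemma fat_total {m k : ℕ} (G : SimpleGraph (Fin m)) (c : Fin m → Fin k) (v : Fin m) :
    (G.neighborSet v).ncard = ∑ i : Fin k, Nat.card {u : Fin m | G.Adj v u ∧ c u = i} := by
  classical
  rw [← Nat.card_coe_set_eq, ← Nat.card_sigma]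
  refine Nat.card_congr
    { toFun := fun u => ⟨c u.1, ⟨u.1, u.2, rfl⟩⟩
      invFun := fun p => ⟨p.2.1, p.2.2.1⟩
      left_inv := fun u => rfl
      right_inv := ?_ }
  rintro ⟨i, u, hu, rfl⟩
  rfl

def fatG (k q a b : ℕ) : SimpleGraph (Fin k × ZMod q × Bool) where
  Adj u v := u.2.2 ≠ v.2.2 ∧ (u.2.1 + v.2.1).val < (if u.1 = v.1 then b else a)
  symm := ⟨by
    rintro u v ⟨h1, h2⟩
    refine ⟨h1.symm, ?_⟩
    rw [add_comm]
    simpa [eq_comm] using h2⟩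
  loopless := ⟨fun u h => h.1 rfl⟩

lemma fat_count (k q a b : ℕ) [NeZero q] (ha : a ≤ q) (hb : b ≤ q)
    (v : Fin k × ZMod q × Bool) (i : Fin k) :
    Nat.card {u | (fatG k q a b).Adj v u ∧ u.1 = i} = if v.1 = i then b else a := by
  obtain ⟨j, s, e⟩ := v
  set w := if j = i then b else a with hw
  have hwq : w ≤ q := by rw [hw]; split_ifs <;> assumption
  have hv : ∀ r : Fin w, ((r : ℕ) : ZMod q).val = r := fun r =>
    ZMod.val_natCast_of_lt (lt_of_lt_of_le r.2 hwq)
  rw [← Nat.card_fin w]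
  symm
  refine Nat.card_eq_of_bijective
    (fun r : Fin w => ⟨(i, ((r : ℕ) : ZMod q) - s, !e), ⟨by simp, ?_⟩, rfl⟩) ⟨?_, ?_⟩
  · simp only [add_sub_cancel]
    rw [hv]; exact r.2
  · intro r r' h
    simp only [Subtype.mk.injEq, Prod.mk.injEq, sub_left_inj, true_and, and_true] at h
    apply Fin.ext
    rw [← hv r, ← hv r', h]
  · rintro ⟨⟨i', t, f⟩, ⟨h1, h2⟩, h3⟩
    simp only at h1 h2 h3
    subst h3
    refine ⟨⟨(s + t).val, h2⟩, ?_⟩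
    have : (!e) = f := by cases e <;> cases f <;> simp_all
    simp [this]

lemma fat_exists (k a b q : ℕ) (hk : 2 ≤ k) (hq : 0 < q) (h : b + (k - 1) * a = q) :
    ∃ (m : ℕ) (G : SimpleGraph (Fin m)) (c : Fin m → Fin k), Function.Surjective c ∧
      (∀ v, (G.neighborSet v).ncard = q) ∧
      ∀ v i, Nat.card {u : Fin m | G.Adj v u ∧ c u = i} = if c v = i then b else a := by
  haveI : NeZero q := ⟨hq.ne'⟩
  have hb : b ≤ q := by omega
  have ha : a ≤ q := by
    have : 1 * a ≤ (k - 1) * a := Nat.mul_le_mul_right _ (by omega)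
    omega
  let e := Fintype.equivFin (Fin k × ZMod q × Bool)
  have key : ∀ v i, Nat.card {u | ((fatG k q a b).comap e.symm).Adj v u ∧ (e.symm u).1 = i}
      = if (e.symm v).1 = i then b else a := by
    intro v i
    rw [← fat_count k q a b ha hb]
    exact Nat.card_congr (e.symm.subtypeEquiv (fun u => Iff.rfl))
  refine ⟨_, (fatG k q a b).comap e.symm, fun x => (e.symm x).1, ?_, ?_, key⟩
  · intro i
    exact ⟨e (i, 0, true), by simp⟩
  · intro v
    rw [fat_total _ (fun x => (e.symm x).1) v]
    simp only [key]
    rw [← Finset.add_sum_erase _ _ (Finset.mem_univ (e.symm v).1), if_pos rfl,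
      Finset.sum_congr rfl (g := fun _ => a)
        (fun x hx => if_neg (Finset.ne_of_mem_erase hx).symm)]
    simp [h]

theorem stmt_12 (k : ℕ) (hk : 2 ≤ k) (α β : ℚ)
    (hα : 0 ≤ α ∧ α < 1 / ((k : ℚ) - 1)) (hβ : β ∈ Set.Icc (0 : ℚ) 1)
    (h : β + ((k : ℚ) - 1) * α = 1) :
    ∃ (m : ℕ) (G : SimpleGraph (Fin m)) (d : ℕ),
      0 < d ∧ (∀ v : Fin m, (G.neighborSet v).ncard = d) ∧
      ∃ c : Fin m → Fin k, IsFATColoring G k (α : ℝ) (β : ℝ) c := by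
  obtain ⟨hα0, -⟩ := hα
  obtain ⟨hβ0, -⟩ := hβ
  obtain ⟨x, hx⟩ := Int.eq_ofNat_of_zero_le (Rat.num_nonneg.2 hα0)
  obtain ⟨y, hy⟩ := Int.eq_ofNat_of_zero_le (Rat.num_nonneg.2 hβ0)
  have hp : (0 : ℚ) < α.den := by exact_mod_cast α.den_pos
  have hr : (0 : ℚ) < β.den := by exact_mod_cast β.den_pos
  have hA : α * α.den = x := by rw [Rat.mul_den_eq_num, hx]; simp
  have hB : β * β.den = y := by rw [Rat.mul_den_eq_num, hy]; simp
  have hq : y * α.den + (k - 1) * (x * β.den) = α.den * β.den := by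
    have : ((y * α.den + (k - 1) * (x * β.den) : ℕ) : ℚ) = (α.den * β.den : ℕ) := by
      push_cast [Nat.cast_sub (show 1 ≤ k by omega)]
      rw [← hA, ← hB]
      linear_combination (α.den * β.den : ℚ) * h
    exact_mod_cast this
  obtain ⟨m, G, c, hs, hd, hc⟩ := fat_exists k _ _ _ hk (Nat.mul_pos α.den_pos β.den_pos) hq
  refine ⟨m, G, _, Nat.mul_pos α.den_pos β.den_pos, hd, c, hs, fun v i => ?_⟩
  rw [hc, hd]
  have hA' : (α : ℝ) * α.den = x := by exact_mod_cast congrArg (Rat.cast : ℚ → ℝ) hA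
  have hB' : (β : ℝ) * β.den = y := by exact_mod_cast congrArg (Rat.cast : ℚ → ℝ) hB
  split_ifs
  · push_cast
    rw [← hB']; ring
  · push_cast
    rw [← hA']; ring
end

section
/- Let k ≥ 2 be an integer, and let α ∈ [0, 1/(k-1)) and β ∈ [0,1] be rational numbers satisfying β + (k-1)·α = 1. Then there exists a sequence (G_n)_{n ∈ ℕ} of finite simple graphs such that: (i) each G_n is regular of positive degree; (ii) each G_n admits a FAT k-coloring with parameters α and β; and (iii) for all m ≠ n, the graphs G_m and G_n are not homomorphically equivalent, i.e., it is not the case that there exist both a graph homomorphism from G_m to G_n and a graph homomorphism from G_n to G_m. -/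
def auxG (k B A : ℕ) : SimpleGraph (Fin k × Fin (B+1) × Fin (A+1)) where
  Adj v w := (v.1 = w.1 ∧ v.2.2 = w.2.2 ∧ v.2.1 ≠ w.2.1) ∨
    (v.1 ≠ w.1 ∧ v.2.1 = w.2.1 ∧ v.2.2 ≠ w.2.2)
  symm := ⟨by
    rintro v w (⟨h1, h2, h3⟩ | ⟨h1, h2, h3⟩)
    · exact Or.inl ⟨h1.symm, h2.symm, h3.symm⟩
    · exact Or.inr ⟨h1.symm, h2.symm, h3.symm⟩⟩
  loopless := ⟨by
    rintro v (⟨h1, h2, h3⟩ | ⟨h1, h2, h3⟩)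
    · exact h3 rfl
    · exact h1 rfl⟩

lemma auxG_count (k B A : ℕ) (v : Fin k × Fin (B+1) × Fin (A+1)) (i : Fin k) :
    {u | (auxG k B A).Adj v u ∧ u.1 = i}.ncard = if v.1 = i then B else A := by
  obtain ⟨j, x, s⟩ := v
  split_ifs with hc
  · have : {u | (auxG k B A).Adj (j, x, s) u ∧ u.1 = i} = (fun y => (i, y, s)) '' ({x}ᶜ : Set _) := by
      ext ⟨a, y, t⟩
      simp only [auxG, Set.mem_ofPred_eq, Set.mem_image, Set.mem_compl_iff, Set.mem_singleton_iff,
        Prod.mk.injEq] at *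
      constructor
      · intro hh
        exact ⟨y, by grind, by grind⟩
      · rintro ⟨z, hz⟩
        grind
    rw [this, Set.ncard_image_of_injective _ (fun a b h => by simpa using h), Set.ncard_compl]
    simp
  · have : {u | (auxG k B A).Adj (j, x, s) u ∧ u.1 = i} = (fun t => (i, x, t)) '' ({s}ᶜ : Set _) := by
      ext ⟨a, y, t⟩
      simp only [auxG, Set.mem_ofPred_eq, Set.mem_image, Set.mem_compl_iff, Set.mem_singleton_iff,
        Prod.mk.injEq] at *
      constructor
      · intro hh
        exact ⟨t, by grind, by grind⟩
      · rintro ⟨z, hz⟩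
        grind
    rw [this, Set.ncard_image_of_injective _ (fun a b h => by simpa using h), Set.ncard_compl]
    simp

lemma auxG_deg (k B A : ℕ) (v : Fin k × Fin (B+1) × Fin (A+1)) :
    ((auxG k B A).neighborSet v).ncard = B + (k - 1) * A := by
  classical
  rw [Set.ncard_eq_toFinset_card',
    Finset.card_eq_sum_card_fiberwise (f := Prod.fst) (t := Finset.univ) (fun _ _ => by simp)]
  have : ∀ i : Fin k, (((auxG k B A).neighborSet v).toFinset.filter (fun u => u.1 = i)).card
      = if v.1 = i then B else A := by
    intro i
    rw [← auxG_count, ← Set.ncard_coe_finset]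
    congr 1
    ext u
    simp
  rw [Finset.sum_congr rfl (fun i _ => this i), ← Finset.add_sum_erase _ _ (Finset.mem_univ v.1)]
  rw [Finset.sum_congr rfl (g := fun _ => A)]
  · simp
  · intro i hi
    rw [if_neg]
    exact (Finset.ne_of_mem_erase hi).symm

lemma aux_main (k : ℕ) (hk : 2 ≤ k) (α β : ℚ) (a b q : ℕ) (hb : 0 < b)
    (ha' : (a : ℚ) = α * q) (hb' : (b : ℚ) = β * q)
    (h : β + ((k : ℚ) - 1) * α = 1) (N : ℕ) :
    ∃ (m : ℕ) (G : SimpleGraph (Fin m)),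
      (∃ d : ℕ, 0 < d ∧ ∀ v, (G.neighborSet v).ncard = d) ∧
      (∃ c : Fin m → Fin k, IsFATColoring G k (α : ℝ) (β : ℝ) c) ∧
      Nonempty ((⊤ : SimpleGraph (Fin (N+1))) →g G) := by
  set B := b * (N+1) with hB
  set A := a * (N+1) with hA
  let e := (Fintype.equivFin (Fin k × Fin (B+1) × Fin (A+1))).symm
  have hBN : N + 1 ≤ B := Nat.le_mul_of_pos_left _ hb
  have hdeg : ∀ v, (((auxG k B A).comap e).neighborSet v).ncard = B + (k-1)*A := by
    intro v
    rw [← auxG_deg k B A (e v), ← Set.ncard_image_of_injective _ e.injective]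
    congr 1
    ext u
    constructor
    · rintro ⟨w, hw, rfl⟩
      exact hw
    · intro hu
      exact ⟨e.symm u, by simpa using hu, by simp⟩
  have hqd : ((B + (k-1)*A : ℕ) : ℚ) = q * (N+1) := by
    have : ((k - 1 : ℕ) : ℚ) = k - 1 := by rw [Nat.cast_sub (by omega)]; simp
    push_cast [hA, hB, this]
    rw [ha', hb']
    linear_combination (q * (N+1) : ℚ) * h
  refine ⟨_, (auxG k B A).comap e, ⟨B + (k-1)*A, by omega, hdeg⟩,
    ⟨fun v => (e v).1, ?_, ?_⟩, ?_⟩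
  · intro i
    exact ⟨e.symm (i, 0, 0), by simp⟩
  · intro v i
    have h1 : Nat.card {u | ((auxG k B A).comap e).Adj v u ∧ (e u).1 = i}
        = if (e v).1 = i then B else A := by
      rw [← auxG_count k B A (e v), Nat.card_coe_set_eq, ← Set.ncard_image_of_injective _ e.injective]
      congr 1
      ext u
      constructor
      · rintro ⟨w, hw, rfl⟩
        exact hw
      · intro hu
        exact ⟨e.symm u, by simpa using hu, by simp⟩
    rw [h1, hdeg]
    split_ifs
    · have : (B : ℚ) = β * ((B + (k-1)*A : ℕ) : ℚ) := by
        rw [hqd, hB]; push_cast; rw [hb']; ring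
      exact_mod_cast this
    · have : (A : ℚ) = α * ((B + (k-1)*A : ℕ) : ℚ) := by
        rw [hqd, hA]; push_cast; rw [ha']; ring
      exact_mod_cast this
  · have i0 : Fin k := ⟨0, by omega⟩
    refine ⟨⟨fun x => e.symm (i0, Fin.castLE (by omega) x, 0), ?_⟩⟩
    intro x y hxy
    have hne : x ≠ y := hxy
    simp only [SimpleGraph.comap_adj, Equiv.apply_symm_apply, auxG]
    left
    exact ⟨trivial, trivial, fun hh => hne (Fin.castLE_injective _ hh)⟩

theorem stmt_13 (k : ℕ) (hk : 2 ≤ k) (α β : ℚ)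
    (hα : 0 ≤ α ∧ α < 1 / ((k : ℚ) - 1)) (hβ : β ∈ Set.Icc (0 : ℚ) 1)
    (h : β + ((k : ℚ) - 1) * α = 1) :
    ∃ (m : ℕ → ℕ) (G : (n : ℕ) → SimpleGraph (Fin (m n))),
      (∀ n : ℕ, ∃ d : ℕ, 0 < d ∧ ∀ v : Fin (m n), ((G n).neighborSet v).ncard = d) ∧
      (∀ n : ℕ, ∃ c : Fin (m n) → Fin k, IsFATColoring (G n) k (α : ℝ) (β : ℝ) c) ∧
      (∀ i j : ℕ, i ≠ j →
        ¬ (Nonempty (G i →g G j) ∧ Nonempty (G j →g G i))) := by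
  have hk1 : (0 : ℚ) < (k : ℚ) - 1 := by
    have : (2 : ℚ) ≤ k := by exact_mod_cast hk
    linarith
  have hβ0 : 0 < β := by
    have := (lt_div_iff₀ hk1).1 hα.2
    linarith
  have hnum : ∀ x : ℚ, 0 ≤ x → ((x.num.toNat : ℕ) : ℚ) = x * x.den := by
    intro x hx
    rw [Rat.mul_den_eq_num]
    have := Int.toNat_of_nonneg (Rat.num_nonneg.2 hx)
    exact_mod_cast this
  have key := aux_main k hk α β (α.num.toNat * β.den) (β.num.toNat * α.den) (α.den * β.den)
    (by
      have := Rat.num_pos.2 hβ0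
      exact Nat.mul_pos (by omega) α.den_pos)
    (by push_cast; rw [hnum α hα.1]; ring)
    (by push_cast; rw [hnum β hβ0.le]; ring) h
  choose m G hreg hfat hcl using key
  let f : ℕ → ℕ := fun n => Nat.rec 0 (fun _ x => m x + x + 1) n
  have hf : ∀ n, f (n+1) = m (f n) + f n + 1 := fun n => rfl
  have hmono : StrictMono f := strictMono_nat_of_lt_succ (fun n => by rw [hf]; omega)
  have hno : ∀ i j, i < j → ¬ Nonempty (G (f j) →g G (f i)) := by
    rintro i j hij ⟨φ⟩
    obtain ⟨ψ⟩ := hcl (f j)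
    have hinj : Function.Injective (φ.comp ψ) := by
      intro x y hxy
      by_contra hne
      have : (G (f i)).Adj (φ.comp ψ x) (φ.comp ψ y) := (φ.comp ψ).map_adj hne
      exact this.ne hxy
    have h1 := Fintype.card_le_of_injective _ hinj
    simp only [Fintype.card_fin] at h1
    have h2 : f (i+1) ≤ f j := hmono.monotone hij
    rw [hf] at h2
    omega
  refine ⟨fun n => m (f n), fun n => G (f n), fun n => hreg _, fun n => hfat _, ?_⟩
  rintro i j hij ⟨h1, h2⟩
  rcases lt_or_gt_of_ne hij with h' | h'
  · exact hno i j h' h2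
  · exact hno j i h' h1
end
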